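/- Multi-task generalization bound (Theorem A.1, restated from Ando–Zhang): Let X be a measurable space, let μ_1, …, μ_K be probability measures on X (one per task), and let F be a nonempty countable class of measurable functions h : X → [0, 1/2] (each h representing a loss composed with a hypothesis). Let the sample consist of independent random variables X_k^{(i)} for k = 1,…,K and i = 1,…,n, where X_k^{(i)} has distribution μ_k. Define the joint risk ε(h) = (1/K) Σ_{k=1}^K E_{x∼μ_k}[h(x)], the joint empirical risk ε̂(h) = (1/(nK)) Σ_{k=1}^K Σ_{i=1}^n h(X_k^{(i)}), and the joint Rademacher complexity R(F) = E_X[ E_σ[ sup_{h∈F} (1/(nK)) Σ_{k=1}^K Σ_{i=1}^n σ_k^{(i)} h(X_k^{(i)}) ] ], where σ_k^{(i)} are i.i.d. uniform on {−1, +1}, independent of the sample. Then for every δ ∈ (0,1), with probability at least 1 − δ over the draw of the sample, for every h ∈ F: ε(h) ≤ ε̂(h) + 2 R(F) + √(log(1/δ)/(2nK)). -/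

import Mathlib

/-!
Write `φ(ω) = sup_i (ε(h i) - ε̂(h i)(ω))`. The bound is the sum of two facts.

* `symmetrization`: `E φ ≤ 2 R(F)`. The true risk is the mean of the empirical risk of an
  independent copy of the sample, and swapping any set of coordinates between the sample and its
  copy preserves the joint law, because the two points in each coordinate have the same
  distribution (which may vary with the coordinate). Hence arbitrary signs may be inserted; the
  supremum then splits into two parts, each averaging to `R(F)`.
* `hasSubgaussianMGF_of_bounded_differences`: since the losses lie in `[0, 1/2]`, changing one
  sample point moves `φ` by at most `1 / (2nK)`, so `φ - E φ` is sub-Gaussian and Chernoff's bound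
  gives `P(φ - E φ ≥ t) ≤ exp (-2 nK t ^ 2)`, which equals `δ` at `t = √(log(1/δ)/(2nK))`.

The variance proxy obtained here is four times the optimal one of McDiarmid's inequality. The
losses being bounded by `1/2` rather than `1` compensates exactly for this factor.
-/

open MeasureTheory

namespace MultiTask0

/-- The ±1 value of a Boolean Rademacher sign. -/
noncomputable def rad (b : Bool) : ℝ := if b then 1 else -1

/-- The law of a family of i.i.d. Rademacher signs indexed by `α`
(uniform on `{−1, +1}`, encoded by `Bool`). -/
noncomputable def signMeasure (α : Type*) [Fintype α] : Measure (α → Bool) :=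
  Measure.pi fun _ => (PMF.uniformOfFintype Bool).toMeasure

/-- The law of the joint sample `(X_k^{(i)})_{k ≤ K, i ≤ n}` of independent random
variables with `X_k^{(i)} ∼ μ_k`. -/
noncomputable def sampleMeasure {X : Type*} [MeasurableSpace X] {K : ℕ}
    (μ : Fin K → Measure X) [∀ k, SigmaFinite (μ k)] (n : ℕ) :
    Measure (Fin K × Fin n → X) :=
  Measure.pi fun p => μ p.1

/-- The joint Rademacher complexity
`R(F) = E_X[ E_σ[ sup_{h∈F} (1/(nK)) Σ_{k,i} σ_k^{(i)} h(X_k^{(i)}) ] ]`. -/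
noncomputable def jointRademacher {X : Type*} [MeasurableSpace X] {K : ℕ}
    {ι : Type*} (h : ι → X → ℝ)
    (μ : Fin K → Measure X) [∀ k, SigmaFinite (μ k)] (n : ℕ) : ℝ :=
  ∫ ω, ∫ σ, ⨆ i, (1 / ((n : ℝ) * (K : ℝ))) *
        ∑ p : Fin K × Fin n, rad (σ p) * h i (ω p)
      ∂signMeasure (Fin K × Fin n) ∂sampleMeasure μ n

open ProbabilityTheory

/-! ### Bounded suprema and integrals -/

theorem abs_iSup_le {ι : Type*} [Nonempty ι] {u : ι → ℝ} {B : ℝ} (hu : ∀ i, |u i| ≤ B) :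
    |⨆ i, u i| ≤ B := by
  have hb : BddAbove (Set.range u) := ⟨B, by rintro _ ⟨i, rfl⟩; exact (abs_le.1 (hu i)).2⟩
  obtain ⟨i₀⟩ := ‹Nonempty ι›
  exact abs_le.2 ⟨(abs_le.1 (hu i₀)).1.trans (le_ciSup hb i₀),
    ciSup_le fun i => (abs_le.1 (hu i)).2⟩

theorem bddAbove_of_abs_le {ι : Type*} {u : ι → ℝ} {B : ℝ} (hu : ∀ i, |u i| ≤ B) :
    BddAbove (Set.range u) :=
  ⟨B, by rintro _ ⟨i, rfl⟩; exact (abs_le.1 (hu i)).2⟩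

theorem integrable_of_abs_le {α : Type*} [MeasurableSpace α] {ν : Measure α} [IsFiniteMeasure ν]
    {f : α → ℝ} (hf : Measurable f) {B : ℝ} (hB : ∀ x, |f x| ≤ B) : Integrable f ν :=
  Integrable.of_bound hf.aestronglyMeasurable B
    (Filter.Eventually.of_forall fun x => (Real.norm_eq_abs _).trans_le (hB x))

theorem abs_integral_le {α : Type*} [MeasurableSpace α] {ν : Measure α} [IsProbabilityMeasure ν]
    {f : α → ℝ} {B : ℝ} (hB : ∀ x, |f x| ≤ B) : |∫ x, f x ∂ν| ≤ B := by
  simpa using norm_integral_le_of_norm_le_const (μ := ν)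
    (Filter.Eventually.of_forall fun x => (Real.norm_eq_abs (f x)).trans_le (hB x))

theorem integral_comp_of_measurePreserving {α β : Type*} [MeasurableSpace α] [MeasurableSpace β]
    {ρ : Measure α} {ν : Measure β} {T : α → β} (hT : MeasurePreserving T ρ ν)
    {g : β → ℝ} (hg : Measurable g) : ∫ x, g (T x) ∂ρ = ∫ y, g y ∂ν := by
  rw [← hT.map_eq, integral_map hT.measurable.aemeasurable hg.aestronglyMeasurable]

theorem integrable_exp_of_abs_le {α : Type*} [MeasurableSpace α] {ν : Measure α}
    [IsFiniteMeasure ν] {f : α → ℝ} (hf : Measurable f) {B : ℝ} (hB : ∀ x, |f x| ≤ B)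
    (t M : ℝ) : Integrable (fun x => Real.exp (t * (f x - M))) ν := by
  refine integrable_of_abs_le (by fun_prop) (B := Real.exp (|t| * (B + |M|))) fun x => ?_
  rw [Real.abs_exp, Real.exp_le_exp]
  calc t * (f x - M) ≤ |t * (f x - M)| := le_abs_self _
    _ = |t| * |f x - M| := abs_mul _ _
    _ ≤ |t| * (B + |M|) := by
      gcongr
      exact (abs_sub _ _).trans (by gcongr; exact hB x)

/-! ### Bounded differences imply sub-Gaussian concentration -/

/-- Exponential moment form of the bounded differences inequality. Hoeffding's lemma is applied
to one coordinate at a time: with the others fixed, `f` stays within `c` of a reference value, so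
its range has length at most `2 * c` and each coordinate contributes variance proxy `c ^ 2`. -/
theorem integral_exp_le_of_bounded_differences {X : Type*} [MeasurableSpace X] {c B : ℝ} (t : ℝ) :
    ∀ (m : ℕ) (ν : Fin m → Measure X) [∀ j, IsProbabilityMeasure (ν j)]
      (f : (Fin m → X) → ℝ), Measurable f → (∀ ω, |f ω| ≤ B) →
      (∀ ω j x, |f (Function.update ω j x) - f ω| ≤ c) →
      ∫ ω, Real.exp (t * (f ω - ∫ ω', f ω' ∂Measure.pi ν)) ∂Measure.pi ν
        ≤ Real.exp (m * c ^ 2 * t ^ 2 / 2) := by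
  intro m
  induction m with
  | zero =>
    intro ν _ f hf hB hc
    have h0 : ∀ ω, f ω = f default := fun ω => congrArg f (Subsingleton.elim _ _)
    simp [h0]
  | succ m ih =>
    intro ν _ f hf hB hc
    set ρ : Measure (Fin m → X) := Measure.pi fun j => ν j.succ with hρ
    set ψ : X → (Fin m → X) → ℝ := fun x y => f (Fin.cons x y) with hψ
    have hmp : MeasurePreserving (fun z : X × (Fin m → X) => (Fin.cons z.1 z.2 : Fin (m + 1) → X))
        ((ν 0).prod ρ) (Measure.pi ν) := by
      have := (measurePreserving_piFinSuccAbove ν 0).symm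
      simpa [MeasurableEquiv.piFinSuccAbove, Fin.insertNthEquiv, Fin.insertNth_zero'] using this
    have hψm : Measurable (fun z : X × (Fin m → X) => ψ z.1 z.2) := hf.comp hmp.measurable
    have hψB : ∀ x y, |ψ x y| ≤ B := fun x y => hB _
    have hψy : ∀ y, Measurable fun x => ψ x y := fun y =>
      hψm.comp (measurable_id.prodMk measurable_const)
    have hψx : ∀ x, Measurable fun y => ψ x y := fun x =>
      hψm.comp (measurable_const.prodMk measurable_id)
    set g : (Fin m → X) → ℝ := fun y => ∫ x, ψ x y ∂ν 0 with hg
    have hgm : Measurable g := (hψm.stronglyMeasurable.integral_prod_left' (μ := ν 0)).measurable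
    have hgB : ∀ y, |g y| ≤ B := fun y => abs_integral_le fun x => hψB x y
    have hgc : ∀ y j x, |g (Function.update y j x) - g y| ≤ c := by
      intro y j x
      rw [hg]
      simp only
      rw [← integral_sub (integrable_of_abs_le (hψy _) fun x => hψB x _)
        (integrable_of_abs_le (hψy _) fun x => hψB x _)]
      refine abs_integral_le fun x' => ?_
      have := hc (Fin.cons x' y) j.succ x
      rwa [← Fin.cons_update] at this
    have hM : ∫ ω, f ω ∂Measure.pi ν = ∫ y, g y ∂ρ := by
      rw [← integral_comp_of_measurePreserving hmp hf,
        integral_prod_symm _ (integrable_of_abs_le hψm fun z => hψB z.1 z.2)]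
    have key : ∀ y, ∫ x, Real.exp (t * (ψ x y - g y)) ∂ν 0 ≤ Real.exp (c ^ 2 * t ^ 2 / 2) := by
      intro y
      obtain ⟨x₀⟩ := nonempty_of_isProbabilityMeasure (ν 0)
      have hr : ∀ x, ψ x y ∈ Set.Icc (ψ x₀ y - c) (ψ x₀ y + c) := by
        intro x
        have := hc (Fin.cons x₀ y) 0 x
        rw [Fin.update_cons_zero] at this
        have := abs_le.1 this
        constructor <;> simp only [hψ] <;> linarith [this.1, this.2]
      have := (hasSubgaussianMGF_of_mem_Icc (μ := ν 0) (hψy y).aemeasurable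
        (Filter.Eventually.of_forall hr)).mgf_le t
      refine this.trans (le_of_eq ?_)
      congr 3
      have : ψ x₀ y + c - (ψ x₀ y - c) = 2 * c := by ring
      rw [this]
      simp
    rw [hM]
    have hi : Measurable fun ω => Real.exp (t * (f ω - ∫ y, g y ∂ρ)) := by fun_prop
    rw [← integral_comp_of_measurePreserving hmp hi, integral_prod_symm _
      (integrable_exp_of_abs_le hψm (fun z => hψB z.1 z.2) t _)]
    calc ∫ y, ∫ x, Real.exp (t * (ψ x y - ∫ y, g y ∂ρ)) ∂ν 0 ∂ρ
        ≤ ∫ y, Real.exp (t * (g y - ∫ y, g y ∂ρ)) * Real.exp (c ^ 2 * t ^ 2 / 2) ∂ρ := by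
          refine integral_mono
            (integrable_exp_of_abs_le hψm (fun z => hψB z.1 z.2) t _).integral_prod_right
            ((integrable_exp_of_abs_le hgm hgB t _).mul_const _) fun y => ?_
          have : ∀ x, Real.exp (t * (ψ x y - ∫ y, g y ∂ρ))
              = Real.exp (t * (g y - ∫ y, g y ∂ρ)) * Real.exp (t * (ψ x y - g y)) := by
            intro x
            rw [← Real.exp_add]
            ring_nf
          simp only [this]
          rw [integral_const_mul]
          gcongr
          exact key y
      _ = (∫ y, Real.exp (t * (g y - ∫ y, g y ∂ρ)) ∂ρ) * Real.exp (c ^ 2 * t ^ 2 / 2) :=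
          integral_mul_const _ _
      _ ≤ Real.exp (m * c ^ 2 * t ^ 2 / 2) * Real.exp (c ^ 2 * t ^ 2 / 2) := by
          gcongr
          exact ih _ g hgm hgB hgc
      _ = _ := by
          rw [← Real.exp_add]
          push_cast
          ring_nf

/-- A function on a finite product of probability spaces that moves by at most `c` when one
coordinate is changed is sub-Gaussian around its mean, with variance proxy `|P| * c ^ 2`. -/
theorem hasSubgaussianMGF_of_bounded_differences {X P : Type*} [MeasurableSpace X] [Fintype P]
    [DecidableEq P] (ν : P → Measure X) [∀ p, IsProbabilityMeasure (ν p)] {f : (P → X) → ℝ}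
    (hf : Measurable f) {B c : ℝ} (hB : ∀ ω, |f ω| ≤ B)
    (hc : ∀ ω p x, |f (Function.update ω p x) - f ω| ≤ c) :
    HasSubgaussianMGF (fun ω => f ω - ∫ ω', f ω' ∂Measure.pi ν)
      (Fintype.card P * c.toNNReal ^ 2) (Measure.pi ν) := by
  refine ⟨fun t => integrable_exp_of_abs_le hf hB t _, fun t => ?_⟩
  rcases isEmpty_or_nonempty P with hP | ⟨⟨p₀⟩⟩
  · have h0 : ∀ ω, f ω = f (fun p => hP.elim p) := fun ω => congrArg f (Subsingleton.elim _ _)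
    simp [mgf, h0]
  obtain ⟨ω₀⟩ := nonempty_of_isProbabilityMeasure (Measure.pi ν)
  have hc0 : 0 ≤ c := (abs_nonneg _).trans (hc ω₀ p₀ (ω₀ p₀))
  let e : Fin (Fintype.card P) ≃ P := (Fintype.equivFin P).symm
  have hmp := measurePreserving_piCongrLeft ν e
  set E := MeasurableEquiv.piCongrLeft (fun _ : P => X) e with hE
  have hEa : ∀ η j, E η (e j) = η j := fun η j => by
    simp [hE, MeasurableEquiv.coe_piCongrLeft]
  have hEe : ∀ η, E η = fun p => η (e.symm p) := fun η => by
    funext p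
    simpa using hEa η (e.symm p)
  have := integral_exp_le_of_bounded_differences (c := c) (B := B) t _ (fun j => ν (e j))
    (fun η => f (E η)) (hf.comp E.measurable) (fun _ => hB _) (fun η j x => by
      have hu : E (Function.update η j x) = Function.update (E η) (e j) x := by
        funext p
        rw [hEe, hEe]
        by_cases hp : p = e j
        · subst hp; simp
        · have : e.symm p ≠ j := fun hh => hp (by simp [← hh])
          simp [hp, this]
      rw [hu]
      exact hc _ _ _)
  rw [integral_comp_of_measurePreserving hmp hf,
    integral_comp_of_measurePreserving (g := fun ω => Real.exp (t * (f ω - _))) hmp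
      (by fun_prop)] at this
  simpa [mgf, Real.coe_toNNReal _ hc0] using this

/-! ### Rademacher signs and exchange of independent copies -/

theorem measurable_rad : Measurable rad := measurable_of_countable _

theorem abs_rad (b : Bool) : |rad b| = 1 := by cases b <;> simp [rad]

instance isProbabilityMeasure_signMeasure (α : Type*) [Fintype α] :
    IsProbabilityMeasure (signMeasure α) := by
  unfold signMeasure
  infer_instance

theorem measurePreserving_not_signMeasure (α : Type*) [Fintype α] :
    MeasurePreserving (fun (σ : α → Bool) p => !(σ p)) (signMeasure α) (signMeasure α) := by
  refine measurePreserving_pi _ _ fun _ => ⟨measurable_of_countable _, ?_⟩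
  rw [PMF.toMeasure_map _ _ (measurable_of_countable _)]
  congr 1
  ext b
  cases b <;> simp [PMF.map_apply]

/-- Exchanging a subset of the coordinates of two independent samples preserves their joint law. -/
theorem measurePreserving_exchange {X P : Type*} [MeasurableSpace X] [Fintype P]
    (ν : P → Measure X) [∀ p, IsProbabilityMeasure (ν p)] (σ : P → Bool) :
    MeasurePreserving (fun z : (P → X) × (P → X) =>
        ((fun p => if σ p then z.1 p else z.2 p, fun p => if σ p then z.2 p else z.1 p) :
          (P → X) × (P → X)))
      ((Measure.pi ν).prod (Measure.pi ν)) ((Measure.pi ν).prod (Measure.pi ν)) := by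
  have h1 := measurePreserving_arrowProdEquivProdArrow X X P ν ν
  have h2 : MeasurePreserving (fun (u : P → X × X) p => (if σ p then id else Prod.swap) (u p))
      (Measure.pi fun p => (ν p).prod (ν p)) (Measure.pi fun p => (ν p).prod (ν p)) := by
    refine measurePreserving_pi _ _ fun p => ?_
    split_ifs
    · exact MeasurePreserving.id _
    · exact Measure.measurePreserving_swap
  convert (h1.comp h2).comp h1.symm using 1
  funext z
  ext p <;> cases hp : σ p <;>
    simp [hp, MeasurableEquiv.arrowProdEquivProdArrow, Equiv.arrowProdEquivProdArrow]

theorem abs_const_mul_sum_le {P : Type*} [Fintype P] {a B : ℝ} (ha : 0 ≤ a) {w : P → ℝ}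
    (hw : ∀ p, |w p| ≤ B) : |a * ∑ p, w p| ≤ a * (Fintype.card P * B) := by
  rw [abs_mul, abs_of_nonneg ha]
  gcongr
  refine (Finset.abs_sum_le_sum_abs _ _).trans ?_
  simpa using Finset.sum_le_sum fun p (_ : p ∈ Finset.univ) => hw p

/-! ### Symmetrization -/

/-- Symmetrization: the expected uniform deviation between the mean and the sample sum is at most
twice the expected Rademacher average. -/
theorem symmetrization {X P ι : Type*} [MeasurableSpace X] [Fintype P] [Countable ι]
    [Nonempty ι] (ν : P → Measure X) [∀ p, IsProbabilityMeasure (ν p)]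
    {h : ι → X → ℝ} (hmeas : ∀ i, Measurable (h i)) (hbd : ∀ i x, h i x ∈ Set.Icc (0 : ℝ) (1 / 2))
    {a : ℝ} (ha : 0 ≤ a) :
    ∫ ω, ⨆ i, a * ∑ p, (∫ x, h i x ∂ν p - h i (ω p)) ∂Measure.pi ν ≤
      2 * ∫ ω, ∫ σ, ⨆ i, a * ∑ p, rad (σ p) * h i (ω p) ∂signMeasure P ∂Measure.pi ν := by
  have habs : ∀ i x, |h i x| ≤ 1 / 2 := fun i x =>
    abs_le.2 ⟨by linarith [(hbd i x).1], (hbd i x).2⟩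
  have hdiff : ∀ i x y, |h i x - h i y| ≤ 1 := fun i x y =>
    abs_le.2 ⟨by linarith [(hbd i x).1, (hbd i y).2], by linarith [(hbd i x).2, (hbd i y).1]⟩
  set C : ℝ := a * (Fintype.card P * 1) with hC
  set D : ℝ := a * (Fintype.card P * (1 / 2)) with hD
  -- `G ω ω'` compares the sample `ω` with an independent copy `ω'`.
  set G : (P → X) → (P → X) → ℝ := fun ω ω' => ⨆ i, a * ∑ p, (h i (ω' p) - h i (ω p)) with hG
  have hGi : ∀ (ω ω' : P → X) i, |a * ∑ p, (h i (ω' p) - h i (ω p))| ≤ C := fun ω ω' i =>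
    abs_const_mul_sum_le ha fun p => hdiff i _ _
  have hGB : ∀ ω ω', |G ω ω'| ≤ C := fun ω ω' => abs_iSup_le (hGi ω ω')
  have hGm : Measurable fun z : (P → X) × (P → X) => G z.1 z.2 :=
    Measurable.iSup fun i => by have := hmeas i; fun_prop
  have hGω : ∀ ω, Measurable fun ω' => G ω ω' := fun ω => by
    have := hGm.comp (measurable_prodMk_left (x := ω) (α := P → X) (β := P → X))
    exact this
  have hGint : Integrable (fun z : (P → X) × (P → X) => G z.1 z.2)
      ((Measure.pi ν).prod (Measure.pi ν)) := integrable_of_abs_le hGm fun z => hGB _ _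
  set r : (P → X) → (P → Bool) → ℝ := fun ω σ => ⨆ i, a * ∑ p, rad (σ p) * h i (ω p) with hr
  have hri : ∀ (ω : P → X) (σ : P → Bool) i, |a * ∑ p, rad (σ p) * h i (ω p)| ≤ D := fun ω σ i =>
    abs_const_mul_sum_le ha fun p => by rw [abs_mul, abs_rad, one_mul]; exact habs _ _
  have hrB : ∀ ω σ, |r ω σ| ≤ D := fun ω σ => abs_iSup_le (hri ω σ)
  have hrm : Measurable fun z : (P → X) × (P → Bool) => r z.1 z.2 :=
    Measurable.iSup fun i => by
      have := hmeas i
      have := measurable_rad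
      fun_prop
  have hrω : ∀ σ, Measurable fun ω => r ω σ := fun σ => by
    have := hrm.comp (measurable_prodMk_right (y := σ) (α := P → X))
    exact this
  set A : (P → Bool) → ℝ := fun σ => ∫ ω, r ω σ ∂Measure.pi ν with hA
  have hAm : Measurable A := measurable_of_countable _
  have hAB : ∀ σ, |A σ| ≤ D := fun σ => abs_integral_le fun ω => hrB ω σ
  -- The population means are averages over `ω'`, and a supremum of averages is at most
  -- the average of the suprema.
  have step1 : ∀ ω, (⨆ i, a * ∑ p, (∫ x, h i x ∂ν p - h i (ω p))) ≤
      ∫ ω', G ω ω' ∂Measure.pi ν := by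
    intro ω
    refine ciSup_le fun i => ?_
    have hint : ∀ p, Integrable (fun ω' : P → X => h i (ω' p)) (Measure.pi ν) := fun p =>
      integrable_of_abs_le ((hmeas i).comp (measurable_pi_apply p)) fun _ => habs i _
    have : a * ∑ p, (∫ x, h i x ∂ν p - h i (ω p)) =
        ∫ ω', a * ∑ p, (h i (ω' p) - h i (ω p)) ∂Measure.pi ν := by
      rw [integral_const_mul, integral_finsetSum
        (f := fun p (ω' : P → X) => h i (ω' p) - h i (ω p)) _ fun p _ => (hint p).sub (integrable_const _)]
      congr 1
      refine Finset.sum_congr rfl fun p _ => ?_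
      rw [integral_sub (hint p) (integrable_const _),
        integral_comp_eval (hmeas i).aestronglyMeasurable]
      simp
    rw [this]
    have hm : Measurable fun ω' : P → X => a * ∑ p, (h i (ω' p) - h i (ω p)) := by
      have := hmeas i; fun_prop
    have hle : ∀ ω', a * ∑ p, (h i (ω' p) - h i (ω p)) ≤ G ω ω' := fun ω' =>
      le_ciSup (bddAbove_of_abs_le (hGi ω ω')) i
    exact integral_mono (integrable_of_abs_le hm fun ω' => hGi ω ω' i)
      (integrable_of_abs_le (hGω ω) (hGB ω)) hle
  have step2 : ∫ ω, ⨆ i, a * ∑ p, (∫ x, h i x ∂ν p - h i (ω p)) ∂Measure.pi ν ≤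
      ∫ z, G z.1 z.2 ∂(Measure.pi ν).prod (Measure.pi ν) := by
    rw [integral_prod _ hGint]
    refine integral_mono (integrable_of_abs_le (B := C) (Measurable.iSup fun i => ?_)
      fun ω => abs_iSup_le fun i => abs_const_mul_sum_le ha fun p => ?_)
      hGint.integral_prod_left step1
    · have := hmeas i; fun_prop
    · have h1 := abs_le.1 (abs_integral_le (ν := ν p) (habs i))
      have h2 := hbd i (ω p)
      have h3 : 0 ≤ ∫ x, h i x ∂ν p := integral_nonneg fun x => (hbd i x).1
      exact abs_le.2 ⟨by linarith [h2.2], by linarith [h2.1]⟩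
  -- For a fixed sign pattern, exchange the coordinates with negative sign, then split the supremum.
  have step3 : ∀ σ : P → Bool, ∫ z, G z.1 z.2 ∂(Measure.pi ν).prod (Measure.pi ν) ≤
      A σ + A (fun p => !(σ p)) := by
    intro σ
    have hi1 : Integrable (fun z : (P → X) × (P → X) => r z.2 σ)
        ((Measure.pi ν).prod (Measure.pi ν)) :=
      integrable_of_abs_le ((hrω σ).comp measurable_snd) fun z => hrB _ _
    have hi2 : Integrable (fun z : (P → X) × (P → X) => r z.1 (fun p => !(σ p)))
        ((Measure.pi ν).prod (Measure.pi ν)) :=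
      integrable_of_abs_le ((hrω _).comp measurable_fst) fun z => hrB _ _
    have hs : A σ + A (fun p => !(σ p)) =
        ∫ z, (r z.2 σ + r z.1 (fun p => !(σ p))) ∂(Measure.pi ν).prod (Measure.pi ν) := by
      rw [integral_add hi1 hi2, integral_fun_snd (fun ω => r ω σ),
        integral_fun_fst (fun ω => r ω (fun p => !(σ p)))]
      simp [hA]
    have hT := measurePreserving_exchange ν σ
    rw [hs, ← integral_comp_of_measurePreserving hT hGm]
    refine integral_mono (integrable_of_abs_le (hGm.comp hT.measurable) fun z => hGB _ _)
      (hi1.add hi2) fun z => ?_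
    refine ciSup_le fun i => ?_
    have hsplit : a * ∑ p, (h i (if σ p then z.2 p else z.1 p) -
          h i (if σ p then z.1 p else z.2 p)) =
        a * ∑ p, rad (σ p) * h i (z.2 p) + a * ∑ p, rad (!(σ p)) * h i (z.1 p) := by
      rw [← mul_add, ← Finset.sum_add_distrib]
      congr 1
      refine Finset.sum_congr rfl fun p _ => ?_
      cases σ p <;> simp [rad] <;> ring
    exact hsplit.le.trans (add_le_add (le_ciSup (bddAbove_of_abs_le (hri z.2 σ)) i)
      (le_ciSup (bddAbove_of_abs_le (hri z.1 _)) i))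
  have hAint : Integrable A (signMeasure P) := integrable_of_abs_le hAm hAB
  have hnot := measurePreserving_not_signMeasure P
  have hAint' : Integrable (fun σ => A fun p => !(σ p)) (signMeasure P) :=
    integrable_of_abs_le (hAm.comp hnot.measurable) fun σ => hAB _
  have step4 := integral_mono (μ := signMeasure P) (integrable_const _) (hAint.add hAint') step3
  have hswap : ∫ ω, ∫ σ, r ω σ ∂signMeasure P ∂Measure.pi ν = ∫ σ, A σ ∂signMeasure P :=
    integral_integral_swap (integrable_of_abs_le hrm fun z => hrB _ _)
  simp only [Pi.add_apply] at step4
  rw [integral_add hAint hAint', integral_comp_of_measurePreserving hnot hAm] at step4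
  simp at step4
  rw [hswap]
  linarith

/-! ### The generalization bound -/

/-- Changing one sample point moves the uniform deviation by at most `a / 2`. -/
theorem abs_deviation_update_sub_le {X P ι : Type*} [MeasurableSpace X] [Fintype P]
    [DecidableEq P] [Nonempty ι] (ν : P → Measure X) [∀ p, IsProbabilityMeasure (ν p)]
    {h : ι → X → ℝ} (hbd : ∀ i x, h i x ∈ Set.Icc (0 : ℝ) (1 / 2)) {a B : ℝ} (ha : 0 ≤ a)
    (hB : ∀ (ω : P → X) i, |a * ∑ p, (∫ x, h i x ∂ν p - h i (ω p))| ≤ B)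
    (ω : P → X) (q : P) (x : X) :
    |(⨆ i, a * ∑ p, (∫ x, h i x ∂ν p - h i (Function.update ω q x p))) -
      ⨆ i, a * ∑ p, (∫ x, h i x ∂ν p - h i (ω p))| ≤ a / 2 := by
  have hle : ∀ ω₁ ω₂ : P → X, (∀ p, p ≠ q → ω₁ p = ω₂ p) →
      (⨆ i, a * ∑ p, (∫ x, h i x ∂ν p - h i (ω₁ p))) ≤
        (⨆ i, a * ∑ p, (∫ x, h i x ∂ν p - h i (ω₂ p))) + a / 2 := by
    intro ω₁ ω₂ hω
    refine ciSup_le fun i => ?_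
    have h1 := le_ciSup (bddAbove_of_abs_le (hB ω₂)) i
    have h2 : a * ∑ p, (∫ x, h i x ∂ν p - h i (ω₁ p)) -
        a * ∑ p, (∫ x, h i x ∂ν p - h i (ω₂ p)) = a * (h i (ω₂ q) - h i (ω₁ q)) := by
      rw [← mul_sub, ← Finset.sum_sub_distrib, Finset.sum_eq_single q]
      · ring
      · intro p _ hp
        rw [hω p hp]
        ring
      · simp
    have h3 : a * (h i (ω₂ q) - h i (ω₁ q)) ≤ a * (1 / 2) := by
      gcongr
      linarith [(hbd i (ω₂ q)).2, (hbd i (ω₁ q)).1]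
    linarith
  have h1 := hle (Function.update ω q x) ω fun p hp => Function.update_of_ne hp _ _
  have h2 := hle ω (Function.update ω q x) fun p hp => (Function.update_of_ne hp _ _).symm
  exact abs_le.2 ⟨by linarith, by linarith⟩

/-- **Multi-task generalization bound** (Theorem A.1, restated from Ando–Zhang):
for a nonempty countable class `F = {h i}` of measurable loss functions with values in
`[0, 1/2]`, with probability at least `1 − δ` over the joint sample drawn independently
from the `K` tasks (`n` samples each), every `h ∈ F` satisfies
`ε(h) ≤ ε̂(h) + 2 R(F) + √(log(1/δ)/(2nK))`. -/
theorem multitask_generalization_bound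
    {X : Type*} [MeasurableSpace X] {K n : ℕ} (hK : 0 < K) (hn : 0 < n)
    (μ : Fin K → Measure X) [∀ k, IsProbabilityMeasure (μ k)]
    {ι : Type*} [Countable ι] [Nonempty ι]
    (h : ι → X → ℝ) (hmeas : ∀ i, Measurable (h i))
    (hbd : ∀ i x, h i x ∈ Set.Icc (0 : ℝ) (1 / 2))
    {δ : ℝ} (hδ : δ ∈ Set.Ioo (0 : ℝ) 1) :
    ENNReal.ofReal (1 - δ) ≤
      sampleMeasure μ n
        {ω | ∀ i : ι,
          (1 / (K : ℝ)) * ∑ k : Fin K, ∫ x, h i x ∂μ k ≤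
            (1 / ((n : ℝ) * (K : ℝ))) * ∑ p : Fin K × Fin n, h i (ω p)
              + 2 * jointRademacher h μ n
              + Real.sqrt (Real.log (1 / δ) / (2 * (n : ℝ) * (K : ℝ)))} := by
  set P := Fin K × Fin n
  set a : ℝ := 1 / ((n : ℝ) * (K : ℝ)) with ha
  have hKR : (0 : ℝ) < K := by exact_mod_cast hK
  have hnR : (0 : ℝ) < n := by exact_mod_cast hn
  have ha0 : 0 ≤ a := by positivity
  set ν : P → Measure X := fun p => μ p.1 with hν
  have hS : sampleMeasure μ n = Measure.pi ν := rfl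
  set φ : (P → X) → ℝ := fun ω => ⨆ i, a * ∑ p, (∫ x, h i x ∂ν p - h i (ω p)) with hφ
  set C : ℝ := a * (Fintype.card P * 1) with hC
  have hφi : ∀ (ω : P → X) i, |a * ∑ p, (∫ x, h i x ∂ν p - h i (ω p))| ≤ C := fun ω i =>
    abs_const_mul_sum_le ha0 fun p => by
      have h0 : 0 ≤ ∫ x, h i x ∂ν p := integral_nonneg fun x => (hbd i x).1
      have h1 := abs_le.1 (abs_integral_le (ν := ν p) (f := h i) (B := 1 / 2) fun x =>
        abs_le.2 ⟨by linarith [(hbd i x).1], (hbd i x).2⟩)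
      have h2 := hbd i (ω p)
      exact abs_le.2 ⟨by linarith [h2.2], by linarith [h2.1]⟩
  have hφm : Measurable φ := Measurable.iSup fun i => by have := hmeas i; fun_prop
  have hsym : ∫ ω, φ ω ∂Measure.pi ν ≤ 2 * jointRademacher h μ n :=
    symmetrization ν hmeas hbd ha0
  have hsub := hasSubgaussianMGF_of_bounded_differences ν hφm (fun ω => abs_iSup_le (hφi ω))
    (abs_deviation_update_sub_le ν hbd ha0 hφi)
  set t : ℝ := Real.sqrt (Real.log (1 / δ) / (2 * (n : ℝ) * (K : ℝ))) with ht
  have hlog : 0 ≤ Real.log (1 / δ) :=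
    Real.log_nonneg (by rw [le_div_iff₀ hδ.1]; linarith [hδ.2])
  have htail : (Measure.pi ν).real {ω | t ≤ φ ω - ∫ ω', φ ω' ∂Measure.pi ν} ≤ δ := by
    refine (hsub.measure_ge_le (Real.sqrt_nonneg _)).trans (le_of_eq ?_)
    have hcard : (Fintype.card P : ℝ) = K * n := by simp [P]
    have hexp : -t ^ 2 / (2 * ((Fintype.card P : ℝ) * (a / 2) ^ 2)) = Real.log δ := by
      rw [ht, Real.sq_sqrt (by positivity), hcard, ha, one_div δ, Real.log_inv]
      field_simp
    push_cast
    rw [Real.coe_toNNReal _ (by positivity), hexp, Real.exp_log hδ.1]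
  have hTm : MeasurableSet {ω | t ≤ φ ω - ∫ ω', φ ω' ∂Measure.pi ν} :=
    measurableSet_le measurable_const (hφm.sub_const _)
  have hcompl : ENNReal.ofReal (1 - δ) ≤
      Measure.pi ν {ω | t ≤ φ ω - ∫ ω', φ ω' ∂Measure.pi ν}ᶜ := by
    rw [← ofReal_measureReal]
    refine ENNReal.ofReal_le_ofReal ?_
    rw [probReal_compl_eq_one_sub hTm]
    linarith
  rw [hS]
  refine hcompl.trans (measure_mono fun ω hω i => ?_)
  simp only [Set.mem_compl_iff, Set.mem_ofPred_eq, not_le] at hω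
  have hle : a * ∑ p, (∫ x, h i x ∂ν p - h i (ω p)) ≤ φ ω :=
    le_ciSup (bddAbove_of_abs_le (hφi ω)) i
  have hrisk : (1 / (K : ℝ)) * ∑ k : Fin K, ∫ x, h i x ∂μ k = a * ∑ p : P, ∫ x, h i x ∂ν p := by
    rw [Fintype.sum_prod_type]
    simp only [hν, Finset.sum_const, Finset.card_univ, Fintype.card_fin, nsmul_eq_mul,
      ← Finset.mul_sum, ha]
    field_simp
  rw [Finset.sum_sub_distrib, mul_sub] at hle
  rw [hrisk]
  linarith

end MultiTask0
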